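/- For fixed ρ₁, ρ₂ ∈ (0,1) with ρ₁ + ρ₂ < 1, the quantity x₁·x₂·Ψ(x₁,x₂;ρ₁,ρ₂) is monotone nondecreasing in x₁ and in x₂ on (0,1]: that is, if 0 < x₁ ≤ x₁' ≤ 1 and 0 < x₂ ≤ x₂' ≤ 1 then x₁x₂Ψ(x₁,x₂;ρ₁,ρ₂) ≤ x₁'x₂'Ψ(x₁',x₂';ρ₁,ρ₂). -/

import Mathlib

open MeasureTheory Real

noncomputable def betaFn (a b : ℝ) : ℝ := Real.Gamma a * Real.Gamma b / Real.Gamma (a + b)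

noncomputable def incBeta (z a b : ℝ) : ℝ := ∫ t in (0:ℝ)..z, t ^ (a - 1) * (1 - t) ^ (b - 1)

noncomputable def regIncBeta (z a b : ℝ) : ℝ := incBeta z a b / betaFn a b

noncomputable def mvBeta (ρ₁ ρ₂ ρ₀ : ℝ) : ℝ :=
  Real.Gamma ρ₁ * Real.Gamma ρ₂ * Real.Gamma ρ₀ / Real.Gamma (ρ₁ + ρ₂ + ρ₀)

noncomputable def Psi (x₁ x₂ ρ₁ ρ₂ : ℝ) : ℝ :=
  (x₁ * x₂)⁻¹ * (mvBeta ρ₁ ρ₂ (1 - ρ₁ - ρ₂))⁻¹ *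
    ∫ p in {p : ℝ × ℝ | 0 ≤ p.1 ∧ 0 ≤ p.2 ∧ p.1 + p.2 ≤ 1},
      regIncBeta p.1 ρ₁ (1 - ρ₁) ^ (1 / x₁ - 1) *
        regIncBeta p.2 ρ₂ (1 - ρ₂) ^ (1 / x₂ - 1) *
        p.1 ^ (ρ₁ - 1) * p.2 ^ (ρ₂ - 1) * (1 - p.1 - p.2) ^ (-ρ₁ - ρ₂)

lemma beta_intervalIntegrable {a b : ℝ} (ha : 0 < a) (hb : 0 < b) :
    IntervalIntegrable (fun t : ℝ => t ^ (a - 1) * (1 - t) ^ (b - 1)) volume 0 1 := by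
  have h := Complex.betaIntegral_convergent (u := (a : ℂ)) (v := (b : ℂ))
    (by simpa using ha) (by simpa using hb)
  rw [intervalIntegrable_iff_integrableOn_Ioc_of_le zero_le_one] at h ⊢
  have h2 := h.re
  refine h2.congr ?_
  refine (ae_restrict_mem measurableSet_Ioc).mono fun t ht => ?_
  have e : (t : ℂ) ^ ((a : ℂ) - 1) * (1 - (t : ℂ)) ^ ((b : ℂ) - 1)
      = ((t ^ (a - 1) * (1 - t) ^ (b - 1) : ℝ) : ℂ) := by
    push_cast
    rw [Complex.ofReal_cpow ht.1.le, Complex.ofReal_cpow (by linarith [ht.2])]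
    push_cast
    rfl
  simp only [e]
  simp only [RCLike.re_to_complex, Complex.ofReal_re]

lemma beta_fn_eq {a b : ℝ} (ha : 0 < a) (hb : 0 < b) : incBeta 1 a b = betaFn a b := by
  have h := ProbabilityTheory.beta_eq_betaIntegralReal a b ha hb
  change betaFn a b = _ at h
  rw [h, Complex.betaIntegral, incBeta]
  have : ∫ t in (0:ℝ)..1, (t : ℂ) ^ ((a : ℂ) - 1) * (1 - (t : ℂ)) ^ ((b : ℂ) - 1)
      = ∫ t in (0:ℝ)..1, ((t ^ (a - 1) * (1 - t) ^ (b - 1) : ℝ) : ℂ) := by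
    refine intervalIntegral.integral_congr fun t ht => ?_
    rw [Set.uIcc_of_le zero_le_one] at ht
    push_cast
    rw [Complex.ofReal_cpow ht.1, Complex.ofReal_cpow (by linarith [ht.2])]
    push_cast
    rfl
  rw [this, intervalIntegral.integral_ofReal, Complex.ofReal_re]

lemma betaFn_pos' {a b : ℝ} (ha : 0 < a) (hb : 0 < b) : 0 < betaFn a b :=
  ProbabilityTheory.beta_pos ha hb

lemma regIncBeta_nonneg {a b z : ℝ} (ha : 0 < a) (hb : 0 < b) (hz : z ∈ Set.Icc (0:ℝ) 1) :
    0 ≤ regIncBeta z a b := by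
  refine div_nonneg ?_ (betaFn_pos' ha hb).le
  refine intervalIntegral.integral_nonneg hz.1 fun t ht => ?_
  have h1 : 0 ≤ 1 - t := by linarith [ht.2, hz.2]
  exact mul_nonneg (rpow_nonneg ht.1 _) (rpow_nonneg h1 _)

lemma regIncBeta_le_one {a b z : ℝ} (ha : 0 < a) (hb : 0 < b) (hz : z ∈ Set.Icc (0:ℝ) 1) :
    regIncBeta z a b ≤ 1 := by
  rw [regIncBeta, div_le_one (betaFn_pos' ha hb), ← beta_fn_eq ha hb]
  unfold incBeta
  refine intervalIntegral.integral_mono_interval le_rfl hz.1 hz.2 ?_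
    (beta_intervalIntegrable ha hb)
  refine (ae_restrict_mem measurableSet_Ioc).mono fun t ht => ?_
  have h1 : 0 ≤ 1 - t := by linarith [ht.2]
  exact mul_nonneg (rpow_nonneg ht.1.le _) (rpow_nonneg h1 _)

lemma regIncBeta_continuousOn {a b : ℝ} (ha : 0 < a) (hb : 0 < b) :
    ContinuousOn (fun z => regIncBeta z a b) (Set.Icc 0 1) := by
  have h := intervalIntegral.continuousOn_primitive_interval' (beta_intervalIntegrable ha hb)
    (Set.left_mem_uIcc)
  rw [Set.uIcc_of_le zero_le_one] at h
  exact h.div_const _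

/-- The power function cut off to the unit interval. -/
noncomputable def cutPow (e : ℝ) : ℝ → ℝ := (Set.Icc (0:ℝ) 1).indicator (fun t => t ^ e)

lemma cutPow_integrable {e : ℝ} (he : -1 < e) : Integrable (cutPow e) := by
  unfold cutPow
  rw [integrable_indicator_iff measurableSet_Icc, integrableOn_Icc_iff_integrableOn_Ioc,
    ← intervalIntegrable_iff_integrableOn_Ioc_of_le zero_le_one]
  exact intervalIntegral.intervalIntegrable_rpow' he

lemma cutPow_of_mem {e t : ℝ} (h0 : 0 ≤ t) (h1 : t ≤ 1) : cutPow e t = t ^ e :=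
  Set.indicator_of_mem (s := Set.Icc (0:ℝ) 1) ⟨h0, h1⟩ _

lemma rpow_le_three {e t : ℝ} (he : -1 < e) (h0 : 1 / 3 ≤ t) (h1 : t ≤ 1) : t ^ e ≤ 3 := by
  have ht : 0 < t := by linarith
  calc t ^ e ≤ t ^ (-1 : ℝ) := rpow_le_rpow_of_exponent_ge ht h1 he.le
    _ = t⁻¹ := rpow_neg_one t
    _ ≤ 3 := by rw [inv_le_comm₀ ht (by norm_num)]; linarith

lemma triple_bound {u v w r s t : ℝ} (hu : -1 < u) (hv : -1 < v) (hw : -1 < w)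
    (hr : 0 ≤ r) (hs : 0 ≤ s) (ht : 0 ≤ t) (h : r + s + t = 1) :
    r ^ u * s ^ v * t ^ w ≤ 3 * (r ^ u * s ^ v + s ^ v * t ^ w + r ^ u * t ^ w) := by
  have a := rpow_nonneg hr u
  have b := rpow_nonneg hs v
  have c := rpow_nonneg ht w
  have ab := mul_nonneg a b
  have bc := mul_nonneg b c
  have ac := mul_nonneg a c
  by_cases h1 : 1 / 3 ≤ r
  · have := rpow_le_three hu h1 (by linarith)
    nlinarith [mul_le_mul_of_nonneg_right this bc]
  by_cases h2 : 1 / 3 ≤ s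
  · have := rpow_le_three hv h2 (by linarith)
    nlinarith [mul_le_mul_of_nonneg_right this ac]
  · have := rpow_le_three hw (t := t) (by linarith) (by linarith)
    nlinarith [mul_le_mul_of_nonneg_right this ab]

lemma cutPow_pair {u w : ℝ} (hu : -1 < u) (hw : -1 < w) :
    Integrable (fun p : ℝ × ℝ => cutPow u p.2 * cutPow w (1 - p.1 - p.2)) := by
  have h := Integrable.convolution_integrand (ContinuousLinearMap.mul ℝ ℝ)
    (cutPow_integrable hu) (cutPow_integrable hw)
  have mp : MeasurePreserving (fun p : ℝ × ℝ => (1 - p.1, p.2)) (volume.prod volume)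
      (volume.prod volume) :=
    (Measure.measurePreserving_sub_left volume (1:ℝ)).prod (MeasurePreserving.id volume)
  exact mp.integrable_comp_of_integrable h

lemma cutPow_pair' {u w : ℝ} (hu : -1 < u) (hw : -1 < w) :
    Integrable (fun p : ℝ × ℝ => cutPow u p.1 * cutPow w (1 - p.1 - p.2)) := by
  have h := (cutPow_pair hu hw).swap
  refine h.congr (ae_of_all _ fun p => ?_)
  simp only [Function.comp, Prod.fst_swap, Prod.snd_swap]
  rw [sub_right_comm]

lemma simplex_meas : MeasurableSet {p : ℝ × ℝ | 0 ≤ p.1 ∧ 0 ≤ p.2 ∧ p.1 + p.2 ≤ 1} := by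
  refine IsClosed.measurableSet ?_
  refine (isClosed_le continuous_const continuous_fst).inter
    ((isClosed_le continuous_const continuous_snd).inter
      (isClosed_le (continuous_fst.add continuous_snd) continuous_const))

theorem psi_mul_monotone (ρ₁ ρ₂ : ℝ)
    (hρ₁ : ρ₁ ∈ Set.Ioo (0:ℝ) 1) (hρ₂ : ρ₂ ∈ Set.Ioo (0:ℝ) 1) (hsum : ρ₁ + ρ₂ < 1)
    (x₁ x₁' x₂ x₂' : ℝ) (hx₁ : 0 < x₁) (hx₁' : x₁ ≤ x₁') (hx₁'' : x₁' ≤ 1)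
    (hx₂ : 0 < x₂) (hx₂' : x₂ ≤ x₂') (hx₂'' : x₂' ≤ 1) :
    x₁ * x₂ * Psi x₁ x₂ ρ₁ ρ₂ ≤ x₁' * x₂' * Psi x₁' x₂' ρ₁ ρ₂ := by
  obtain ⟨r1, r1'⟩ := hρ₁
  obtain ⟨r2, r2'⟩ := hρ₂
  have q1 : 0 < 1 - ρ₁ := by linarith
  have q2 : 0 < 1 - ρ₂ := by linarith
  have p1 : 0 < x₁' := by linarith
  have p2 : 0 < x₂' := by linarith
  have hB : 0 < mvBeta ρ₁ ρ₂ (1 - ρ₁ - ρ₂) := by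
    unfold mvBeta
    have g1 := Gamma_pos_of_pos r1
    have g2 := Gamma_pos_of_pos r2
    have g3 := Gamma_pos_of_pos (show 0 < 1 - ρ₁ - ρ₂ by linarith)
    have g4 := Gamma_pos_of_pos (show 0 < ρ₁ + ρ₂ + (1 - ρ₁ - ρ₂) by linarith)
    positivity
  unfold Psi
  rw [mul_assoc (x₁ * x₂)⁻¹, mul_assoc (x₁' * x₂')⁻¹, mul_inv_cancel_left₀ (by positivity),
    mul_inv_cancel_left₀ (by positivity)]
  refine mul_le_mul_of_nonneg_left ?_ (inv_pos.2 hB).le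
  have e1 : 0 ≤ 1 / x₁' - 1 := by
    rw [sub_nonneg, le_div_iff₀ p1]; linarith
  have e2 : 0 ≤ 1 / x₂' - 1 := by
    rw [sub_nonneg, le_div_iff₀ p2]; linarith
  have f1 : 1 / x₁' - 1 ≤ 1 / x₁ - 1 := sub_le_sub_right (one_div_le_one_div_of_le hx₁ hx₁') 1
  have f2 : 1 / x₂' - 1 ≤ 1 / x₂ - 1 := sub_le_sub_right (one_div_le_one_div_of_le hx₂ hx₂') 1
  refine integral_mono_of_nonneg ?_ ?_ ?_
  · refine (ae_restrict_mem simplex_meas).mono fun p hp => ?_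
    obtain ⟨a, b, c⟩ := hp
    have i1 := regIncBeta_nonneg (z := p.1) r1 q1 ⟨a, by linarith⟩
    have i2 := regIncBeta_nonneg (z := p.2) r2 q2 ⟨b, by linarith⟩
    have d : 0 ≤ 1 - p.1 - p.2 := by linarith
    simp only [Pi.zero_apply]
    positivity
  · have hdom : Integrable (fun p : ℝ × ℝ =>
        3 * (cutPow (ρ₁ - 1) p.1 * cutPow (ρ₂ - 1) p.2
          + cutPow (ρ₂ - 1) p.2 * cutPow (-ρ₁ - ρ₂) (1 - p.1 - p.2)
          + cutPow (ρ₁ - 1) p.1 * cutPow (-ρ₁ - ρ₂) (1 - p.1 - p.2))) :=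
      ((((cutPow_integrable (by linarith)).mul_prod (cutPow_integrable (by linarith))).add
        (cutPow_pair (by linarith) (by linarith))).add
        (cutPow_pair' (by linarith) (by linarith))).const_mul 3
    refine (hdom.integrableOn).mono' ?_ ?_
    · have c1 : Measurable (Set.IccExtend (zero_le_one (α := ℝ))
          ((Set.Icc (0:ℝ) 1).domRestrict fun z => regIncBeta z ρ₁ (1 - ρ₁))) :=
        (regIncBeta_continuousOn r1 q1).domRestrict.Icc_extend'.measurable
      have c2 : Measurable (Set.IccExtend (zero_le_one (α := ℝ))
          ((Set.Icc (0:ℝ) 1).domRestrict fun z => regIncBeta z ρ₂ (1 - ρ₂))) :=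
        (regIncBeta_continuousOn r2 q2).domRestrict.Icc_extend'.measurable
      have m : Measurable (fun p : ℝ × ℝ =>
        (Set.IccExtend (zero_le_one (α := ℝ))
          ((Set.Icc (0:ℝ) 1).domRestrict fun z => regIncBeta z ρ₁ (1 - ρ₁)) p.1) ^ (1 / x₁' - 1) *
        (Set.IccExtend (zero_le_one (α := ℝ))
          ((Set.Icc (0:ℝ) 1).domRestrict fun z => regIncBeta z ρ₂ (1 - ρ₂)) p.2) ^ (1 / x₂' - 1) *
        p.1 ^ (ρ₁ - 1) * p.2 ^ (ρ₂ - 1) * (1 - p.1 - p.2) ^ (-ρ₁ - ρ₂)) := by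
        have c1' := c1.comp (measurable_fst : Measurable (Prod.fst : ℝ × ℝ → ℝ))
        have c2' := c2.comp (measurable_snd : Measurable (Prod.snd : ℝ × ℝ → ℝ))
        exact ((((c1'.pow_const _).mul (c2'.pow_const _)).mul (measurable_fst.pow_const _)).mul
          (measurable_snd.pow_const _)).mul (Measurable.pow_const (by fun_prop) _)
      refine m.aestronglyMeasurable.congr ?_
      refine (ae_restrict_mem simplex_meas).mono fun p hp => ?_
      obtain ⟨a, b, c⟩ := hp
      simp only
      rw [Set.IccExtend_of_mem _ _ (⟨a, by linarith⟩ : p.1 ∈ Set.Icc (0:ℝ) 1),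
        Set.IccExtend_of_mem _ _ (⟨b, by linarith⟩ : p.2 ∈ Set.Icc (0:ℝ) 1)]
      rfl
    · refine (ae_restrict_mem simplex_meas).mono fun p hp => ?_
      obtain ⟨a, b, c⟩ := hp
      have i1 := regIncBeta_nonneg (z := p.1) r1 q1 ⟨a, by linarith⟩
      have i2 := regIncBeta_nonneg (z := p.2) r2 q2 ⟨b, by linarith⟩
      have j1 := rpow_le_one i1 (regIncBeta_le_one (z := p.1) r1 q1 ⟨a, by linarith⟩) e1
      have j2 := rpow_le_one i2 (regIncBeta_le_one (z := p.2) r2 q2 ⟨b, by linarith⟩) e2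
      have d : 0 ≤ 1 - p.1 - p.2 := by linarith
      rw [Real.norm_of_nonneg (by positivity), cutPow_of_mem a (by linarith),
        cutPow_of_mem b (by linarith), cutPow_of_mem d (by linarith)]
      refine le_trans ?_ (triple_bound (by linarith) (by linarith) (by linarith) a b d (by ring))
      have k := mul_le_one₀ j1 (rpow_nonneg i2 (1 / x₂' - 1)) j2
      rw [mul_assoc, mul_assoc]
      have n : 0 ≤ p.1 ^ (ρ₁ - 1) * (p.2 ^ (ρ₂ - 1) * (1 - p.1 - p.2) ^ (-ρ₁ - ρ₂)) := by
        positivity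
      rw [mul_assoc (p.1 ^ (ρ₁ - 1))]
      exact mul_le_of_le_one_left n k
  · refine (ae_restrict_mem simplex_meas).mono fun p hp => ?_
    obtain ⟨a, b, c⟩ := hp
    have i1 := regIncBeta_nonneg (z := p.1) r1 q1 ⟨a, by linarith⟩
    have i2 := regIncBeta_nonneg (z := p.2) r2 q2 ⟨b, by linarith⟩
    have k1 := rpow_le_rpow_of_exponent_ge' i1
      (regIncBeta_le_one (z := p.1) r1 q1 ⟨a, by linarith⟩) e1 f1
    have k2 := rpow_le_rpow_of_exponent_ge' i2
      (regIncBeta_le_one (z := p.2) r2 q2 ⟨b, by linarith⟩) e2 f2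
    have d : 0 ≤ 1 - p.1 - p.2 := by linarith
    simp only
    gcongr
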